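/- (Closed-form APRIL leakage equation.) Let z = E_patch + E_pos ∈ ℝ^{c×p} and let the loss be L(Q,K,V,E_pos) = g(Qz, Kz, Vz) with z = E_patch + E_pos. Then the gradient matrix ∇_{E_pos} L ∈ ℝ^{c×p} of L with respect to the learnable position embedding satisfies (∇_{E_pos} L)(E_patch + E_pos)ᵀ = Qᵀ(∇_Q L) + Kᵀ(∇_K L) + Vᵀ(∇_V L). -/

import Mathlib

/-!
STATEMENT 0 (APRIL, gradients of the self-attention loss w.r.t. Q, K, V).
The loss is `L(Q,K,V,z) = g (Q*z, K*z, V*z)`.  If `g` has gradient matrices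
`Gq, Gk, Gv` (w.r.t. its three arguments, via the Frobenius inner product)
at `(Q*z, K*z, V*z)`, then the gradient matrix of `Q ↦ L(Q,K,V,z)` is
`Gq * zᵀ`, and likewise `Gk * zᵀ` for `K` and `Gv * zᵀ` for `V`.
-/

open Matrix

attribute [local instance] Matrix.normedAddCommGroup Matrix.normedSpace

noncomputable section

/-- `G` is the gradient matrix of the scalar function `F` at `X`:
it represents the Fréchet derivative of `F` at `X` via the Frobenius
inner product, `(dF)(H) = trace (Gᵀ * H)`. -/
def HasGradientMatrixAt {α β : Type*} [Fintype α] [Fintype β]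
    (F : Matrix α β ℝ → ℝ) (G : Matrix α β ℝ) (X : Matrix α β ℝ) : Prop :=
  ∃ D : Matrix α β ℝ →L[ℝ] ℝ, HasFDerivAt F D X ∧ ∀ H, D H = Matrix.trace (Gᵀ * H)

/-- `(Gq, Gk, Gv)` are the gradient matrices of `g` with respect to its three
matrix arguments at the point `x = (q, k, v)`, i.e. they represent the Fréchet
derivative of `g` at `x` via the Frobenius inner product. -/
def HasGradientTripleAt {d p : ℕ}
    (g : Matrix (Fin d) (Fin p) ℝ × Matrix (Fin d) (Fin p) ℝ × Matrix (Fin d) (Fin p) ℝ → ℝ)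
    (Gq Gk Gv : Matrix (Fin d) (Fin p) ℝ)
    (x : Matrix (Fin d) (Fin p) ℝ × Matrix (Fin d) (Fin p) ℝ × Matrix (Fin d) (Fin p) ℝ) :
    Prop :=
  ∃ D : (Matrix (Fin d) (Fin p) ℝ × Matrix (Fin d) (Fin p) ℝ × Matrix (Fin d) (Fin p) ℝ) →L[ℝ] ℝ,
    HasFDerivAt g D x ∧
    ∀ Hq Hk Hv, D (Hq, Hk, Hv) =
      Matrix.trace (Gqᵀ * Hq) + Matrix.trace (Gkᵀ * Hk) + Matrix.trace (Gvᵀ * Hv)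

/-!
Moving the embedding `z` along `M * z` changes `Q * z` by `Q * M * z`, which is also the effect of
moving `Q` along `Q * M`; likewise for `K` and `V`. The chain rule therefore gives
`⟪GE, M * z⟫ = ⟪GQ, Q * M⟫ + ⟪GK, K * M⟫ + ⟪GV, V * M⟫` for every square matrix `M`, where
`⟪A, B⟫ = trace (Aᵀ * B)`, and moving `z`, `Q`, `K` and `V` to the other side of the pairing
yields the equation.
-/

theorem eq_of_forall_trace_transpose_mul_eq {m n R : Type*} [Fintype m] [Fintype n]
    [NonAssocSemiring R] {A B : Matrix m n R}
    (h : ∀ M : Matrix m n R, trace (Aᵀ * M) = trace (Bᵀ * M)) : A = B :=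
  transpose_injective (ext_iff_trace_mul_right.mpr h)

theorem trace_transpose_mul_transpose_mul {l m n R : Type*} [Fintype l] [Fintype m] [Fintype n]
    [NonUnitalCommSemiring R] (G : Matrix m n R) (z : Matrix l n R) (M : Matrix m l R) :
    trace ((G * zᵀ)ᵀ * M) = trace (Gᵀ * (M * z)) := by
  rw [transpose_mul, transpose_transpose, Matrix.mul_assoc, trace_mul_comm, Matrix.mul_assoc]

theorem trace_transpose_transpose_mul_mul {l m n R : Type*} [Fintype l] [Fintype m] [Fintype n]
    [NonUnitalCommSemiring R] (A : Matrix l m R) (G : Matrix l n R) (M : Matrix m n R) :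
    trace ((Aᵀ * G)ᵀ * M) = trace (Gᵀ * (A * M)) := by
  rw [transpose_mul, transpose_transpose, Matrix.mul_assoc]

theorem HasGradientMatrixAt.trace_transpose_mul_eq_of_comp_affine {m n W : Type*} [Fintype m]
    [Fintype n] [NormedAddCommGroup W] [NormedSpace ℝ W] {g : W → ℝ} {f : Matrix m n ℝ → W}
    {D : W →L[ℝ] ℝ} {G X H : Matrix m n ℝ} {w : W}
    (hG : HasGradientMatrixAt (fun Y => g (f Y)) G X)
    (hg : HasFDerivAt g D (f X)) (hf : ∀ t : ℝ, f (X + t • H) = f X + t • w) :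
    trace (Gᵀ * H) = D w := by
  obtain ⟨D', hD', hD'G⟩ := hG
  have hcomp : HasLineDerivAt ℝ (fun Y => g (f Y)) (D w) X H := by
    simpa only [HasLineDerivAt, hf] using hg.hasLineDerivAt w
  rw [← hD'G]
  exact (hD'.hasLineDerivAt H).unique hcomp

theorem april_closed_form_leakage_general {c p dq dk dv : Type*}
    [Fintype c] [Fintype p] [Fintype dq] [Fintype dk] [Fintype dv]
    {g : Matrix dq p ℝ × Matrix dk p ℝ × Matrix dv p ℝ → ℝ}
    {Q : Matrix dq c ℝ} {K : Matrix dk c ℝ} {V : Matrix dv c ℝ} {Epatch Epos : Matrix c p ℝ}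
    (hg : DifferentiableAt ℝ g
      (Q * (Epatch + Epos), K * (Epatch + Epos), V * (Epatch + Epos)))
    {GE : Matrix c p ℝ} {GQ : Matrix dq c ℝ} {GK : Matrix dk c ℝ} {GV : Matrix dv c ℝ}
    (hGE : HasGradientMatrixAt
      (fun E => g (Q * (Epatch + E), K * (Epatch + E), V * (Epatch + E))) GE Epos)
    (hGQ : HasGradientMatrixAt
      (fun Q' => g (Q' * (Epatch + Epos), K * (Epatch + Epos), V * (Epatch + Epos))) GQ Q)
    (hGK : HasGradientMatrixAt
      (fun K' => g (Q * (Epatch + Epos), K' * (Epatch + Epos), V * (Epatch + Epos))) GK K)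
    (hGV : HasGradientMatrixAt
      (fun V' => g (Q * (Epatch + Epos), K * (Epatch + Epos), V' * (Epatch + Epos))) GV V) :
    GE * (Epatch + Epos)ᵀ = Qᵀ * GQ + Kᵀ * GK + Vᵀ * GV := by
  refine eq_of_forall_trace_transpose_mul_eq fun M => ?_
  set z := Epatch + Epos with hz
  set D := fderiv ℝ g (Q * z, K * z, V * z)
  have hD : HasFDerivAt g D (Q * z, K * z, V * z) := hg.hasFDerivAt
  have along_E : trace (GEᵀ * (M * z)) = D (Q * M * z, K * M * z, V * M * z) :=
    hGE.trace_transpose_mul_eq_of_comp_affine hD fun _ => by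
      simp [← add_assoc, ← hz, Matrix.mul_add, Matrix.mul_assoc]
  have along_Q : trace (GQᵀ * (Q * M)) = D (Q * M * z, 0, 0) :=
    hGQ.trace_transpose_mul_eq_of_comp_affine hD fun _ => by simp [Matrix.add_mul]
  have along_K : trace (GKᵀ * (K * M)) = D (0, K * M * z, 0) :=
    hGK.trace_transpose_mul_eq_of_comp_affine hD fun _ => by simp [Matrix.add_mul]
  have along_V : trace (GVᵀ * (V * M)) = D (0, 0, V * M * z) :=
    hGV.trace_transpose_mul_eq_of_comp_affine hD fun _ => by simp [Matrix.add_mul]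
  calc trace ((GE * zᵀ)ᵀ * M)
      = D (Q * M * z, K * M * z, V * M * z) := by
        rw [trace_transpose_mul_transpose_mul, along_E]
    _ = D (Q * M * z, 0, 0) + D (0, K * M * z, 0) + D (0, 0, V * M * z) := by
        simp [← map_add]
    _ = trace ((Qᵀ * GQ + Kᵀ * GK + Vᵀ * GV)ᵀ * M) := by
        simp only [transpose_add, Matrix.add_mul, trace_add, trace_transpose_transpose_mul_mul,
          along_Q, along_K, along_V]

/-!
STATEMENT 6 (closed-form APRIL leakage equation): with `z = E_patch + E_pos`
and `L(Q,K,V,E_pos) = g (Q z, K z, V z)`, the gradient matrix of `L` w.r.t.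
the learnable position embedding satisfies
`(∇_{E_pos} L) * (E_patch + E_pos)ᵀ = Qᵀ (∇_Q L) + Kᵀ (∇_K L) + Vᵀ (∇_V L)`.
-/
theorem april_closed_form_leakage {p c d : ℕ} (hp : 0 < p) (hc : 0 < c) (hd : 0 < d)
    (g : Matrix (Fin d) (Fin p) ℝ × Matrix (Fin d) (Fin p) ℝ × Matrix (Fin d) (Fin p) ℝ → ℝ)
    (hg : Differentiable ℝ g)
    (Q K V : Matrix (Fin d) (Fin c) ℝ)
    (Epatch Epos : Matrix (Fin c) (Fin p) ℝ)
    (Gq Gk Gv : Matrix (Fin d) (Fin p) ℝ)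
    (hgrad : HasGradientTripleAt g Gq Gk Gv
      (Q * (Epatch + Epos), K * (Epatch + Epos), V * (Epatch + Epos)))
    (GE : Matrix (Fin c) (Fin p) ℝ) (GQ GK GV : Matrix (Fin d) (Fin c) ℝ)
    (hGE : HasGradientMatrixAt
      (fun E => g (Q * (Epatch + E), K * (Epatch + E), V * (Epatch + E))) GE Epos)
    (hGQ : HasGradientMatrixAt
      (fun Q' => g (Q' * (Epatch + Epos), K * (Epatch + Epos), V * (Epatch + Epos))) GQ Q)
    (hGK : HasGradientMatrixAt
      (fun K' => g (Q * (Epatch + Epos), K' * (Epatch + Epos), V * (Epatch + Epos))) GK K)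
    (hGV : HasGradientMatrixAt
      (fun V' => g (Q * (Epatch + Epos), K * (Epatch + Epos), V' * (Epatch + Epos))) GV V) :
    GE * (Epatch + Epos)ᵀ = Qᵀ * GQ + Kᵀ * GK + Vᵀ * GV :=
  april_closed_form_leakage_general (hg _) hGE hGQ hGK hGV
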